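/- Let x_1, …, x_T ∈ ℝ^d with ‖x_t‖ ≤ 1 for all t, let λ > 0 and τ > 0, and define the BBQ query process recursively by A_0 = λ·I and, for t = 1, …, T: if x_tᵀ A_{t−1}^{−1} x_t > τ then x_t is queried and A_t = A_{t−1} + x_t x_tᵀ, otherwise A_t = A_{t−1}. Let N be the number of queried indices. Then N · log(1 + τ) ≤ log det A_T − d · log λ ≤ d · log(1 + N/(λ·d)). -/

import Mathlib

/-!
The process maintains three facts: the current matrix `A` is positive definite, `log det A` has
grown by at least `log (1 + τ)` per query, and `trace A` has grown by at most `1` per query. The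
determinant growth is the matrix determinant lemma `det (A + x xᵀ) = det A * (1 + xᵀ A⁻¹ x)`, and
the trace growth is `trace (x xᵀ) = xᵀ x ≤ 1`. The lower bound is the second fact for the final
matrix. The upper bound is AM–GM on its eigenvalues: with `c = λ + N / d`, the tangent line
inequality `log μ ≤ μ / c - 1 + log c` summed over the eigenvalues gives `log det A ≤ d * log c`,
because `trace A ≤ d * c`.
-/

open Matrix

variable {d : ℕ}

open Classical in
/-- One step of the BBQ query process, tracking the current matrix and the number of
queried points: if `xᵀ A⁻¹ x > τ` then `x` is queried and `A` becomes `A + x xᵀ`. -/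
noncomputable def bbqCountStep (τ : ℝ) (p : Matrix (Fin d) (Fin d) ℝ × ℕ)
    (x : Fin d → ℝ) : Matrix (Fin d) (Fin d) ℝ × ℕ :=
  if x ⬝ᵥ (p.1⁻¹ *ᵥ x) > τ then (p.1 + vecMulVec x x, p.2 + 1) else p

/-- Run the BBQ query process on the sequence `L` starting from `A_0 = λ·I`, returning
the final matrix `A_T` together with the number `N` of queried points. -/
noncomputable def bbqCountRun (lam τ : ℝ) (L : List (Fin d → ℝ)) :
    Matrix (Fin d) (Fin d) ℝ × ℕ :=
  L.foldl (bbqCountStep τ) (lam • (1 : Matrix (Fin d) (Fin d) ℝ), 0)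

lemma det_add_vecMulVec_self (A : Matrix (Fin d) (Fin d) ℝ) (hA : A.PosDef) (x : Fin d → ℝ) :
    (A + vecMulVec x x).det = A.det * (1 + x ⬝ᵥ (A⁻¹ *ᵥ x)) := by
  have h := det_add_replicateCol_mul_replicateRow (ι := Unit) (A := A)
    (isUnit_iff_ne_zero.mpr hA.det_pos.ne') x x
  rw [vecMulVec_eq Unit, h]
  congr 1
  rw [Matrix.mul_assoc, det_unique]
  simp [Matrix.mul_apply, dotProduct, mulVec, replicateRow, replicateCol]

/-- The invariant of the query process: positive definiteness, growth of the log-determinant,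
and growth of the trace. -/
def BBQInvariant (lam τ : ℝ) (p : Matrix (Fin d) (Fin d) ℝ × ℕ) : Prop :=
  p.1.PosDef ∧ (p.2 : ℝ) * Real.log (1 + τ) ≤ Real.log p.1.det - d * Real.log lam ∧
    p.1.trace ≤ lam * d + p.2

lemma BBQInvariant.step {lam τ : ℝ} (hτ : 0 < τ) {p : Matrix (Fin d) (Fin d) ℝ × ℕ}
    (hp : BBQInvariant lam τ p) {x : Fin d → ℝ} (hx : Real.sqrt (x ⬝ᵥ x) ≤ 1) :
    BBQInvariant lam τ (bbqCountStep τ p x) := by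
  obtain ⟨hpos, hdet, htr⟩ := hp
  unfold bbqCountStep
  split_ifs with hq
  · refine ⟨?_, ?_, ?_⟩
    · exact hpos.add_posSemidef (by simpa using posSemidef_vecMulVec_self_star x)
    · have hlog : Real.log (1 + τ) ≤ Real.log (1 + x ⬝ᵥ (p.1⁻¹ *ᵥ x)) :=
        Real.log_le_log (by linarith) (by linarith)
      rw [det_add_vecMulVec_self _ hpos, Real.log_mul hpos.det_pos.ne' (by linarith)]
      push_cast
      linarith
    · have hxx : x ⬝ᵥ x ≤ 1 := by simpa using Real.sqrt_le_iff.mp hx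
      rw [trace_add, trace_vecMulVec]
      push_cast
      linarith
  · exact ⟨hpos, hdet, htr⟩

lemma BBQInvariant.foldl {lam τ : ℝ} (hτ : 0 < τ) (L : List (Fin d → ℝ))
    (hnorm : ∀ x ∈ L, Real.sqrt (x ⬝ᵥ x) ≤ 1) (p : Matrix (Fin d) (Fin d) ℝ × ℕ)
    (hp : BBQInvariant lam τ p) : BBQInvariant lam τ (L.foldl (bbqCountStep τ) p) := by
  induction L generalizing p with
  | nil => exact hp
  | cons x L ih =>
    exact ih (fun y hy => hnorm y (List.mem_cons_of_mem _ hy)) _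
      (hp.step hτ (hnorm x List.mem_cons_self))

/-- AM–GM for the eigenvalues of a positive definite matrix, in logarithmic form. -/
lemma log_det_le_of_trace_le {A : Matrix (Fin d) (Fin d) ℝ} (hA : A.PosDef) {c : ℝ} (hc : 0 < c)
    (htr : A.trace ≤ d * c) : Real.log A.det ≤ d * Real.log c := by
  have hdet : A.det = ∏ i, hA.1.eigenvalues i := by simpa using hA.1.det_eq_prod_eigenvalues
  have htrace : A.trace = ∑ i, hA.1.eigenvalues i := by simpa using hA.1.trace_eq_sum_eigenvalues
  rw [hdet, Real.log_prod (fun i _ => (hA.eigenvalues_pos i).ne')]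
  calc ∑ i, Real.log (hA.1.eigenvalues i)
      ≤ ∑ i, (hA.1.eigenvalues i / c - 1 + Real.log c) := by
        refine Finset.sum_le_sum fun i _ => ?_
        have h := Real.log_le_sub_one_of_pos (div_pos (hA.eigenvalues_pos i) hc)
        rw [Real.log_div (hA.eigenvalues_pos i).ne' hc.ne'] at h
        linarith
    _ = A.trace / c - d + d * Real.log c := by
        rw [htrace, Finset.sum_add_distrib, Finset.sum_sub_distrib, Finset.sum_div]
        simp
    _ ≤ d * Real.log c := by
        have := (div_le_iff₀ hc).mpr htr
        linarith


/-- Log-determinant query complexity bound for the BBQ sampler: if `‖x_t‖ ≤ 1` for all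
`t`, `λ > 0`, `τ > 0`, and `N` is the number of queried points, then
`N · log(1 + τ) ≤ log det A_T − d·log λ ≤ d · log(1 + N/(λ·d))`. -/
theorem bbq_query_complexity (lam τ : ℝ) (hlam : 0 < lam) (hτ : 0 < τ)
    (L : List (Fin d → ℝ)) (hnorm : ∀ x ∈ L, Real.sqrt (x ⬝ᵥ x) ≤ 1) :
    ((bbqCountRun lam τ L).2 : ℝ) * Real.log (1 + τ) ≤
        Real.log (bbqCountRun lam τ L).1.det - d * Real.log lam ∧
      Real.log (bbqCountRun lam τ L).1.det - d * Real.log lam ≤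
        d * Real.log (1 + ((bbqCountRun lam τ L).2 : ℝ) / (lam * d)) := by
  have hinit : BBQInvariant lam τ (lam • (1 : Matrix (Fin d) (Fin d) ℝ), 0) := by
    refine ⟨Matrix.PosDef.one.smul hlam, ?_, ?_⟩
    · simp
    · simp
  obtain ⟨hpos, hdet, htr⟩ : BBQInvariant lam τ (bbqCountRun lam τ L) :=
    BBQInvariant.foldl hτ L hnorm _ hinit
  refine ⟨hdet, ?_⟩
  generalize bbqCountRun lam τ L = p at *
  -- For `d = 0` the quotient `N / (λ * d)` is a junk value, but both sides vanish.
  rcases Nat.eq_zero_or_pos d with rfl | hd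
  · simp
  have hd' : (0 : ℝ) < d := by exact_mod_cast hd
  have hfac : (0 : ℝ) < 1 + (p.2 : ℝ) / (lam * d) := by positivity
  have h := log_det_le_of_trace_le hpos (mul_pos hlam hfac)
    (htr.trans_eq (by field_simp))
  rw [Real.log_mul hlam.ne' hfac.ne'] at h
  linarith
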